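/- arXiv:2406.05890 — 2 statements merged into one kernel-verified Lean document; each statement's English description precedes it below -/
import Mathlib

section
/- Let p ≥ 3 be a prime and let (a_n)_{n≥0} be given by a_n = c_1·λ_1^n + c_2·λ_2^n with a_n ∈ ℚ_p for all n, where c_1, c_2, λ_1, λ_2 are nonzero elements of ℚ_p or of the unramified quadratic extension ℚ_p(√d). Assume |λ_1|_p = |λ_2|_p > 0 and that λ_2/λ_1 is not a root of unity. Let l be the order of λ_2/λ_1 modulo p and k = ν_p((λ_2/λ_1)^l − 1). If −c_1/c_2 does not belong to the closure of {(λ_2/λ_1)^n : n ∈ ℕ}, then the Kepler set of (a_n) is the disjoint union K((a_n)) = ⨆_{i=0}^{l−1} ( a_{i+1}/a_i + p^{m_i}·ℤ_p ), where m_i = ν_p(c_1/c_2) + ν_p(λ_2 − λ_1) − 2·ν_p(c_1/c_2 + (λ_2/λ_1)^i) + k, and the l balls are pairwise disjoint. -/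
/-- The Kepler set of a sequence `a` in `ℚ_[p]`: the closure of the set of
consecutive ratios `a (n+1) / a n` over indices `n` with `a n ≠ 0`. -/
def keplerSet (p : ℕ) [Fact p.Prime] (a : ℕ → ℚ_[p]) : Set ℚ_[p] :=
  closure {x : ℚ_[p] | ∃ n : ℕ, a n ≠ 0 ∧ x = a (n + 1) / a n}

section Ultrametric

variable {K : Type*} [NormedField K] [IsUltrametricDist K]

theorem norm_sub_le_max_norm (x y : K) : ‖x - y‖ ≤ max ‖x‖ ‖y‖ := by
  simpa [sub_eq_add_neg] using IsUltrametricDist.norm_add_le_max x (-y)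

theorem norm_eq_of_norm_sub_lt {x y : K} (h : ‖x - y‖ < ‖y‖) : ‖x‖ = ‖y‖ := by
  have := IsUltrametricDist.norm_add_eq_max_of_norm_ne_norm h.ne
  rwa [sub_add_cancel, max_eq_right h.le] at this

theorem norm_eq_one_of_norm_sub_one_lt {z : K} (hz : ‖z - 1‖ < 1) : ‖z‖ = 1 := by
  simpa using norm_eq_of_norm_sub_lt (y := (1 : K)) (by simpa using hz)

theorem norm_pow_sub_one_le {z : K} (hz : ‖z‖ ≤ 1) (n : ℕ) : ‖z ^ n - 1‖ ≤ ‖z - 1‖ := by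
  rw [← geom_sum_mul, norm_mul]
  refine mul_le_of_le_one_left (norm_nonneg _) ?_
  refine IsUltrametricDist.norm_sum_le_of_forall_le_of_nonneg zero_le_one fun i _ => ?_
  simpa using pow_le_one₀ (norm_nonneg z) hz

theorem norm_pow_sub_one_sub_le {z : K} (hz : ‖z‖ ≤ 1) (n : ℕ) :
    ‖z ^ n - 1 - n * (z - 1)‖ ≤ ‖z - 1‖ ^ 2 := by
  induction n with
  | zero => simp
  | succ n ih =>
    have hn : ‖(n : K)‖ ≤ 1 := IsUltrametricDist.norm_natCast_le_one K n
    have e : z ^ (n + 1) - 1 - ((n + 1 : ℕ) : K) * (z - 1) =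
        z * (z ^ n - 1 - n * (z - 1)) + n * (z - 1) ^ 2 := by push_cast; ring
    rw [e]
    refine (IsUltrametricDist.norm_add_le_max _ _).trans (max_le ?_ ?_)
    · rw [norm_mul]
      exact (mul_le_of_le_one_left (norm_nonneg _) hz).trans ih
    · rw [norm_mul, norm_pow]
      exact mul_le_of_le_one_left (by positivity) hn

/-- A norm form of the lifting-the-exponent lemma for an odd residue characteristic. -/
theorem norm_pow_sub_one_eq {p : ℕ} [Fact p.Prime] (hp : 3 ≤ p)
    (hcast : ∀ n : ℕ, ‖(n : K)‖ = ‖(n : ℚ_[p])‖) (n : ℕ) :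
    ∀ {z : K}, ‖z - 1‖ ≤ (p : ℝ)⁻¹ → ‖z ^ n - 1‖ = ‖z - 1‖ * ‖(n : ℚ_[p])‖ := by
  have hp0 : (0 : ℝ) < (p : ℝ)⁻¹ := by positivity
  have hp1 : (p : ℝ)⁻¹ < 1 := inv_lt_one_of_one_lt₀ (by exact_mod_cast (by omega : 1 < p))
  induction n using Nat.recOnMul with
  | zero => simp
  | one => simp
  | prime q hq =>
    intro z hz
    have hz1 : ‖z‖ ≤ 1 := (norm_eq_one_of_norm_sub_one_lt (hz.trans_lt hp1)).le
    rw [← geom_sum_mul, norm_mul, mul_comm, ← hcast]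
    congr 1
    apply norm_eq_of_norm_sub_lt
    by_cases hqp : q = p
    · subst hqp
      have hodd : Odd q := hq.odd_of_ne_two (by omega)
      obtain ⟨m, hm⟩ := hodd
      have hsum : ∑ i ∈ Finset.range q, (i : K) = q * m := by
        have h := Finset.sum_range_id_mul_two q
        have h2 : ∑ i ∈ Finset.range q, i = q * m := by
          have : q - 1 = m * 2 := by omega
          rw [this, ← mul_assoc] at h
          exact Nat.eq_of_mul_eq_mul_right two_pos h
        have h3 := congrArg (Nat.cast (R := K)) h2
        push_cast at h3
        exact h3
      have e : ∑ i ∈ Finset.range q, z ^ i - q =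
          ∑ i ∈ Finset.range q, (z ^ i - 1 - i * (z - 1)) + q * m * (z - 1) := by
        simp only [Finset.sum_sub_distrib, ← Finset.sum_mul, hsum]
        simp
      have hqn : ‖(q : K)‖ = (q : ℝ)⁻¹ := by rw [hcast]; simp
      have hsq : (q : ℝ)⁻¹ ^ 2 < (q : ℝ)⁻¹ := by nlinarith
      rw [e, hqn]
      refine (IsUltrametricDist.norm_add_le_max _ _).trans_lt (max_lt ?_ ?_)
      · refine (IsUltrametricDist.norm_sum_le_of_forall_le_of_nonneg (sq_nonneg _) fun i _ =>
          (norm_pow_sub_one_sub_le hz1 i).trans ?_).trans_lt hsq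
        gcongr
      · rw [norm_mul, norm_mul, hqn]
        have hm1 : ‖(m : K)‖ ≤ 1 := IsUltrametricDist.norm_natCast_le_one K m
        calc (q : ℝ)⁻¹ * ‖(m : K)‖ * ‖z - 1‖ ≤ (q : ℝ)⁻¹ * 1 * (q : ℝ)⁻¹ := by gcongr
          _ < (q : ℝ)⁻¹ := by nlinarith
    · have hqn : ‖(q : K)‖ = 1 := by
        rw [hcast, Padic.norm_natCast_eq_one_iff]
        exact (Nat.coprime_primes Fact.out hq).2 (Ne.symm hqp)
      have e : ∑ i ∈ Finset.range q, z ^ i - q = ∑ i ∈ Finset.range q, (z ^ i - 1) := by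
        simp [Finset.sum_sub_distrib]
      rw [e, hqn]
      exact (IsUltrametricDist.norm_sum_le_of_forall_le_of_nonneg hp0.le fun i _ =>
        (norm_pow_sub_one_le hz1 i).trans hz).trans_lt hp1
  | mul a b iha ihb =>
    intro z hz
    have hz1 : ‖z‖ ≤ 1 := (norm_eq_one_of_norm_sub_one_lt (hz.trans_lt hp1)).le
    rw [pow_mul, ihb ((norm_pow_sub_one_le hz1 a).trans hz), iha hz]
    push_cast
    rw [norm_mul, mul_assoc]

end Ultrametric

/-- A sequence whose index map is a similarity for the `p`-adic metric on `ℕ` is dense in the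
ball of matching radius. -/
theorem exists_norm_sub_lt_of_similarity {p : ℕ} [Fact p.Prime] (f : ℕ → ℚ_[p]) (m : ℤ)
    (hf : ∀ i j : ℕ, ‖f i - f j‖ = (p : ℝ) ^ (-m) * ‖(i : ℚ_[p]) - j‖) {x : ℚ_[p]}
    (hx : ‖x - f 0‖ ≤ (p : ℝ) ^ (-m)) {ε : ℝ} (hε : 0 < ε) : ∃ j, ‖x - f j‖ < ε := by
  have hp0 : (0 : ℝ) < p := by exact_mod_cast (Fact.out : p.Prime).pos
  have hp1 : (1 : ℝ) < p := by exact_mod_cast (Fact.out : p.Prime).one_lt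
  have hpm : (0 : ℝ) < (p : ℝ) ^ (-m) := by positivity
  have hdiv : ∀ y : ℚ_[p], ‖y / (p : ℚ_[p]) ^ m‖ = ‖y‖ / (p : ℝ) ^ (-m) := fun y => by
    rw [norm_div, Padic.norm_p_zpow]
  have hint : ∀ j, ‖(f j - f 0) / (p : ℚ_[p]) ^ m‖ ≤ 1 := fun j => by
    rw [hdiv, hf, mul_div_cancel_left₀ _ hpm.ne']
    simpa using IsUltrametricDist.norm_natCast_le_one ℚ_[p] j
  have hxint : ‖(x - f 0) / (p : ℚ_[p]) ^ m‖ ≤ 1 := by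
    rw [hdiv]; exact div_le_one_of_le₀ hx hpm.le
  let g : ℕ → ℤ_[p] := fun j => ⟨_, hint j⟩
  let y : ℤ_[p] := ⟨_, hxint⟩
  have hg : ∀ i j, ‖g i - g j‖ = ‖(i : ℤ_[p]) - j‖ := fun i j => by
    rw [PadicInt.norm_def, PadicInt.norm_def]
    push_cast
    change ‖(f i - f 0) / (p : ℚ_[p]) ^ m - (f j - f 0) / (p : ℚ_[p]) ^ m‖ = _
    rw [← sub_div, sub_sub_sub_cancel_right, hdiv, hf, mul_div_cancel_left₀ _ hpm.ne']
  have hmod : ∀ (N : ℕ) (a b : ℤ_[p]), PadicInt.toZModPow N a = PadicInt.toZModPow N b ↔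
      ‖a - b‖ ≤ (p : ℝ) ^ (-N : ℤ) := fun N a b => by
    rw [PadicInt.norm_le_pow_iff_mem_span_pow, ← PadicInt.ker_toZModPow, RingHom.mem_ker,
      map_sub, sub_eq_zero]
  obtain ⟨N, hN⟩ := exists_pow_lt_of_lt_one (div_pos hε hpm) (inv_lt_one_of_one_lt₀ hp1)
  have : NeZero (p ^ N) := ⟨pow_ne_zero _ (Fact.out : p.Prime).ne_zero⟩
  have hinj : Function.Injective fun j : ZMod (p ^ N) => PadicInt.toZModPow N (g j.val) := by
    intro i j hij
    have h := (hmod N _ _).1 hij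
    rw [hg, ← hmod] at h
    simpa using h
  obtain ⟨j, hj⟩ := (Finite.injective_iff_surjective.1 hinj) (PadicInt.toZModPow N y)
  refine ⟨j.val, ?_⟩
  have h := (hmod N _ _).1 hj.symm
  rw [PadicInt.norm_def] at h
  push_cast at h
  change ‖(x - f 0) / (p : ℚ_[p]) ^ m - (f j.val - f 0) / (p : ℚ_[p]) ^ m‖ ≤ _ at h
  rw [← sub_div, sub_sub_sub_cancel_right, hdiv, zpow_neg (p : ℝ) (N : ℤ), zpow_natCast, ← inv_pow] at h
  exact (div_lt_div_iff_of_pos_right hpm).1 (h.trans_lt hN)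

section BinaryRecurrence

variable {p : ℕ} [Fact p.Prime] {K : Type*} [NormedField K] [Algebra ℚ_[p] K]
  {c₁ c₂ lam₁ lam₂ : K} {a : ℕ → ℚ_[p]}

/-- The trace of the characteristic polynomial of a nondegenerate binary recurrence with values
in the base field lies in the base field. -/
theorem exists_algebraMap_eq_add (hc₁ : c₁ ≠ 0) (hc₂ : c₂ ≠ 0) (hne : lam₁ ≠ lam₂)
    (ha : ∀ n : ℕ, algebraMap ℚ_[p] K (a n) = c₁ * lam₁ ^ n + c₂ * lam₂ ^ n) :
    ∃ t : ℚ_[p], algebraMap ℚ_[p] K t = lam₁ + lam₂ := by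
  refine ⟨(a 0 * a 3 - a 1 * a 2) / (a 0 * a 2 - a 1 ^ 2), ?_⟩
  simp only [map_div₀, map_sub, map_mul, map_pow, ha]
  have h : lam₁ - lam₂ ≠ 0 := sub_ne_zero.2 hne
  have e : (c₁ * lam₁ ^ 0 + c₂ * lam₂ ^ 0) * (c₁ * lam₁ ^ 2 + c₂ * lam₂ ^ 2) -
      (c₁ * lam₁ ^ 1 + c₂ * lam₂ ^ 1) ^ 2 = c₁ * c₂ * (lam₁ - lam₂) ^ 2 := by ring
  rw [e, div_eq_iff (by positivity)]
  ring

theorem algebraMap_eq_mul_add_pow (hc₂ : c₂ ≠ 0) (hlam₁ : lam₁ ≠ 0)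
    (ha : ∀ n : ℕ, algebraMap ℚ_[p] K (a n) = c₁ * lam₁ ^ n + c₂ * lam₂ ^ n) (n : ℕ) :
    algebraMap ℚ_[p] K (a n) = c₂ * lam₁ ^ n * (c₁ / c₂ + (lam₂ / lam₁) ^ n) := by
  rw [ha, div_pow]
  field_simp

theorem algebraMap_ratio_sub_ratio (hc₂ : c₂ ≠ 0) (hlam₁ : lam₁ ≠ 0)
    (ha : ∀ n : ℕ, algebraMap ℚ_[p] K (a n) = c₁ * lam₁ ^ n + c₂ * lam₂ ^ n) {m n : ℕ}
    (hm : c₁ / c₂ + (lam₂ / lam₁) ^ m ≠ 0) (hn : c₁ / c₂ + (lam₂ / lam₁) ^ n ≠ 0) :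
    algebraMap ℚ_[p] K (a (m + 1) / a m - a (n + 1) / a n) =
      (lam₂ - lam₁) * (c₁ / c₂) * ((lam₂ / lam₁) ^ m - (lam₂ / lam₁) ^ n) /
        ((c₁ / c₂ + (lam₂ / lam₁) ^ m) * (c₁ / c₂ + (lam₂ / lam₁) ^ n)) := by
  have key : ∀ n, c₁ / c₂ + (lam₂ / lam₁) ^ n ≠ 0 → algebraMap ℚ_[p] K (a (n + 1) / a n) =
      lam₁ * (c₁ / c₂ + (lam₂ / lam₁) * (lam₂ / lam₁) ^ n) /
        (c₁ / c₂ + (lam₂ / lam₁) ^ n) := fun n hn => by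
    simp only [map_div₀, algebraMap_eq_mul_add_pow hc₂ hlam₁ ha]
    rw [div_eq_div_iff (mul_ne_zero (by positivity) hn) hn]
    ring
  have hlam : lam₂ = lam₁ * (lam₂ / lam₁) := by field_simp
  rw [map_sub, key m hm, key n hn, div_sub_div _ _ hm hn]
  congr 1
  generalize lam₂ / lam₁ = μ at hlam ⊢
  subst hlam
  ring

/-- If `-c₁ / c₂` is as close to a power of `lam₂ / lam₁` as the orbit of that power allows, then
it is a limit of powers of `lam₂ / lam₁`. -/
theorem neg_div_mem_closure_pow [IsUltrametricDist K] (hp : 3 ≤ p)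
    (hiso : ∀ x : ℚ_[p], ‖algebraMap ℚ_[p] K x‖ = ‖x‖)
    (hc₁ : c₁ ≠ 0) (hc₂ : c₂ ≠ 0) (hlam₁ : lam₁ ≠ 0) (hne : lam₁ ≠ lam₂)
    (hμ : ‖lam₂ / lam₁‖ = 1)
    (ha : ∀ n : ℕ, algebraMap ℚ_[p] K (a n) = c₁ * lam₁ ^ n + c₂ * lam₂ ^ n)
    {i l k : ℕ} (hk : 0 < k) {v : ℤ} (hv : ‖lam₂ - lam₁‖ = (p : ℝ) ^ (-v))
    (hpow : ∀ j j' : ℕ, ‖(lam₂ / lam₁) ^ (i + l * j) - (lam₂ / lam₁) ^ (i + l * j')‖ =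
      (p : ℝ) ^ (-(k : ℤ)) * ‖(j : ℚ_[p]) - j'‖)
    (hi : ‖c₁ / c₂ + (lam₂ / lam₁) ^ i‖ ≤ (p : ℝ) ^ (-(k : ℤ))) :
    -(c₁ / c₂) ∈ closure {z : K | ∃ n : ℕ, z = (lam₂ / lam₁) ^ n} := by
  obtain ⟨t, ht⟩ := exists_algebraMap_eq_add hc₁ hc₂ hne ha
  have hp1 : (1 : ℝ) < p := by exact_mod_cast (Fact.out : p.Prime).one_lt
  have hp0 : (0 : ℝ) < p := one_pos.trans hp1
  have hk1 : (p : ℝ) ^ (-(k : ℤ)) < 1 := zpow_lt_one_of_neg₀ hp1 (by omega)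
  have h2 : ‖(2 : K)‖ = 1 := by
    have : ‖((2 : ℕ) : ℚ_[p])‖ = 1 := by
      rw [Padic.norm_natCast_eq_one_iff, Nat.coprime_primes Fact.out Nat.prime_two]
      omega
    rwa [← hiso, map_natCast] at this
  have h20 : (2 : K) ≠ 0 := norm_ne_zero_iff.1 (by rw [h2]; exact one_ne_zero)
  have haK := algebraMap_eq_mul_add_pow hc₂ hlam₁ ha
  have hlam : lam₂ = lam₁ * (lam₂ / lam₁) := by field_simp
  have hδ : lam₁ - lam₂ ≠ 0 := sub_ne_zero.2 hne
  have hδn : ‖lam₁ - lam₂‖ = (p : ℝ) ^ (-v) := by rw [norm_sub_rev, hv]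
  set c := c₁ / c₂ with hc
  set μ := lam₂ / lam₁ with hμdef
  let s : ℕ → ℚ_[p] := fun j => a (i + l * j) / (a (i + l * j + 1) - t / 2 * a (i + l * j))
  have hsum : ∀ j, ‖c + μ ^ (i + l * j)‖ ≤ (p : ℝ) ^ (-(k : ℤ)) := fun j => by
    have e : c + μ ^ (i + l * j) = (c + μ ^ i) + (μ ^ (i + l * j) - μ ^ (i + l * 0)) := by
      simp
    rw [e]
    refine (IsUltrametricDist.norm_add_le_max _ _).trans (max_le hi ?_)
    rw [hpow]
    refine mul_le_of_le_one_right (by positivity) ?_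
    simpa using IsUltrametricDist.norm_natCast_le_one ℚ_[p] j
  have hdiff : ∀ j, ‖c - μ ^ (i + l * j)‖ = 1 := fun j => by
    have h : ‖-(2 * μ ^ (i + l * j))‖ = 1 := by rw [norm_neg, norm_mul, h2, norm_pow, hμ]; simp
    rw [← h]
    apply norm_eq_of_norm_sub_lt
    rw [h]
    have e : c - μ ^ (i + l * j) - -(2 * μ ^ (i + l * j)) = c + μ ^ (i + l * j) := by ring
    rw [e]
    exact (hsum j).trans_lt hk1
  have hd0 : ∀ j, c - μ ^ (i + l * j) ≠ 0 := fun j =>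
    norm_ne_zero_iff.1 (by rw [hdiff]; exact one_ne_zero)
  have hs : ∀ j, algebraMap ℚ_[p] K (s j) =
      2 * (c + μ ^ (i + l * j)) / ((lam₁ - lam₂) * (c - μ ^ (i + l * j))) := fun j => by
    have e : algebraMap ℚ_[p] K (a (i + l * j + 1) - t / 2 * a (i + l * j)) =
        c₂ * lam₁ ^ (i + l * j) * ((lam₁ - lam₂) / 2 * (c - μ ^ (i + l * j))) := by
      simp only [map_sub, map_mul, map_div₀, ht, haK, map_ofNat]
      rw [hlam]
      field_simp
      ring
    simp only [s]
    rw [map_div₀, e, haK, mul_div_mul_left _ _ (by positivity), div_mul_eq_mul_div,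
      div_div_eq_mul_div, mul_comm (2 : K)]
  have hsim : ∀ j j', ‖s j - s j'‖ = (p : ℝ) ^ (-(k - v)) * ‖(j : ℚ_[p]) - j'‖ := fun j j' => by
    have e : algebraMap ℚ_[p] K (s j - s j') =
        2 * 2 * c * (μ ^ (i + l * j') - μ ^ (i + l * j)) * -1 /
          ((lam₁ - lam₂) * (c - μ ^ (i + l * j)) * (c - μ ^ (i + l * j'))) := by
      have h1 := hd0 j
      have h3 := hd0 j'
      rw [map_sub, hs, hs]
      field_simp
      ring
    have hcn : ‖c‖ = 1 := by
      have h : ‖-μ ^ i‖ = 1 := by rw [norm_neg, norm_pow, hμ, one_pow]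
      rw [← h]
      apply norm_eq_of_norm_sub_lt
      rw [h, sub_neg_eq_add]
      exact hi.trans_lt hk1
    rw [← hiso, e]
    simp only [norm_mul, norm_div, h2, hcn, hdiff, hδn, hpow, norm_neg, norm_one, one_mul, mul_one]
    rw [norm_sub_rev, mul_div_right_comm, ← zpow_sub₀ hp0.ne']
    congr 2
    ring
  have hs0 : ‖(0 : ℚ_[p]) - s 0‖ ≤ (p : ℝ) ^ (-(k - v)) := by
    rw [zero_sub, norm_neg, ← hiso, hs]
    simp only [norm_mul, norm_div, h2, hdiff, hδn, one_mul, mul_one]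
    rw [div_le_iff₀ (by positivity), ← zpow_add₀ hp0.ne']
    rw [show -((k : ℤ) - v) + -v = -k by ring]
    exact hsum 0
  rw [Metric.mem_closure_iff]
  intro ε hε
  obtain ⟨j, hj⟩ := exists_norm_sub_lt_of_similarity s _ hsim hs0
    (div_pos hε (zpow_pos hp0 (-v)))
  refine ⟨_, ⟨i + l * j, rfl⟩, ?_⟩
  rw [zero_sub, norm_neg, ← hiso, hs] at hj
  simp only [norm_mul, norm_div, h2, hdiff, hδn, one_mul, mul_one] at hj
  rw [dist_eq_norm, ← neg_add', norm_neg]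
  exact (div_lt_div_iff_of_pos_right (zpow_pos hp0 (-v))).1 hj

end BinaryRecurrence

theorem stmt_1 (p : ℕ) [Fact p.Prime] (hp : 3 ≤ p)
    -- `K` is `ℚ_p` or the unramified quadratic extension `ℚ_p(√d)` of `ℚ_p`:
    -- a nonarchimedean normed field extension of `ℚ_p`, spanned by `1` and `√d`
    -- for a nonsquare unit `d`, with norms integer powers of `p` (unramifiedness)
    (K : Type) [NormedField K] [Algebra ℚ_[p] K]
    (hiso : ∀ x : ℚ_[p], ‖algebraMap ℚ_[p] K x‖ = ‖x‖)
    (hna : ∀ x y : K, ‖x + y‖ ≤ max ‖x‖ ‖y‖)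
    (hval : ∀ x : K, x ≠ 0 → ∃ m : ℤ, ‖x‖ = (p : ℝ) ^ (-m))
    (d : ℚ_[p]) (hd : ‖d‖ = 1) (hdns : ¬ ∃ y : ℚ_[p], y ^ 2 = d)
    (sq : K) (hsq : sq ^ 2 = algebraMap ℚ_[p] K d)
    (hspan : ∀ x : K, ∃ u v : ℚ_[p], x = algebraMap ℚ_[p] K u + algebraMap ℚ_[p] K v * sq)
    -- the sequence `a n = c₁ lam₁ ^ n + c₂ lam₂ ^ n`, with values in `ℚ_p`
    (c₁ c₂ lam₁ lam₂ : K) (hc₁ : c₁ ≠ 0) (hc₂ : c₂ ≠ 0) (hlam₁ : lam₁ ≠ 0) (hlam₂ : lam₂ ≠ 0)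
    (hnorm : ‖lam₁‖ = ‖lam₂‖) (hpos : 0 < ‖lam₂‖)
    (hru : ∀ n : ℕ, 0 < n → (lam₂ / lam₁) ^ n ≠ 1)
    (a : ℕ → ℚ_[p])
    (ha : ∀ n : ℕ, algebraMap ℚ_[p] K (a n) = c₁ * lam₁ ^ n + c₂ * lam₂ ^ n)
    -- `l` is the order of `lam₂/lam₁` modulo `p`
    (l : ℕ) (hl0 : 0 < l) (hl : ‖(lam₂ / lam₁) ^ l - 1‖ ≤ (p : ℝ)⁻¹)
    (hlmin : ∀ m : ℕ, 0 < m → ‖(lam₂ / lam₁) ^ m - 1‖ ≤ (p : ℝ)⁻¹ → l ≤ m)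
    -- `k = ν_p((lam₂/lam₁) ^ l - 1)`
    (k : ℕ) (hk : ‖(lam₂ / lam₁) ^ l - 1‖ = (p : ℝ) ^ (-(k : ℤ)))
    -- `-c₁/c₂` is not in the closure of `{(lam₂/lam₁) ^ n}`
    (hcl : -(c₁ / c₂) ∉ closure {z : K | ∃ n : ℕ, z = (lam₂ / lam₁) ^ n})
    -- `vc = ν_p(c₁/c₂)`, `vΔ = ν_p(lam₂ - lam₁)`, `w i = ν_p(c₁/c₂ + (lam₂/lam₁) ^ i)`
    (vc vΔ : ℤ) (hvc : ‖c₁ / c₂‖ = (p : ℝ) ^ (-vc)) (hvΔ : ‖lam₂ - lam₁‖ = (p : ℝ) ^ (-vΔ))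
    (w : ℕ → ℤ) (hw : ∀ i ∈ Finset.range l, ‖c₁ / c₂ + (lam₂ / lam₁) ^ i‖ = (p : ℝ) ^ (-(w i))) :
    (keplerSet p a =
      ⋃ i ∈ Finset.range l,
        {x : ℚ_[p] | ‖x - a (i + 1) / a i‖ ≤ (p : ℝ) ^ (-(vc + vΔ - 2 * w i + (k : ℤ)))}) ∧
    (↑(Finset.range l) : Set ℕ).PairwiseDisjoint
      (fun i =>
        {x : ℚ_[p] | ‖x - a (i + 1) / a i‖ ≤ (p : ℝ) ^ (-(vc + vΔ - 2 * w i + (k : ℤ)))}) := by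
  have : IsUltrametricDist K :=
    IsUltrametricDist.isUltrametricDist_of_forall_norm_add_le_max_norm hna
  have hp1 : (1 : ℝ) < p := by exact_mod_cast (by omega : 1 < p)
  have hp0 : (0 : ℝ) < p := one_pos.trans hp1
  have hμ : ‖lam₂ / lam₁‖ = 1 := by rw [norm_div, hnorm, div_self hpos.ne']
  have hne : lam₁ ≠ lam₂ := fun h => hru 1 one_pos (by rw [← h, div_self hlam₁, one_pow])
  have hk0 : 0 < k := by
    by_contra h
    obtain rfl : k = 0 := by omega
    rw [hk] at hl
    simp only [Nat.cast_zero, neg_zero, zpow_zero] at hl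
    exact absurd hl (not_le.2 (inv_lt_one_of_one_lt₀ hp1))
  have hcast : ∀ n : ℕ, ‖(n : K)‖ = ‖(n : ℚ_[p])‖ := fun n => by
    rw [← hiso, map_natCast]
  have hratio := fun {m n} => algebraMap_ratio_sub_ratio (m := m) (n := n) hc₂ hlam₁ ha
  have hclos := fun {i} hpow hi =>
    hcl (neg_div_mem_closure_pow (i := i) (l := l) hp hiso hc₁ hc₂ hlam₁ hne hμ ha hk0 hvΔ hpow hi)
  set c := c₁ / c₂
  set μ := lam₂ / lam₁
  have hpow : ∀ i j j' : ℕ, ‖μ ^ (i + l * j) - μ ^ (i + l * j')‖ =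
      (p : ℝ) ^ (-(k : ℤ)) * ‖(j : ℚ_[p]) - j'‖ := by
    intro i j j'
    wlog hjj : j' ≤ j generalizing j j'
    · rw [norm_sub_rev, this j' j (by omega), norm_sub_rev (j : ℚ_[p])]
    obtain ⟨q, rfl⟩ := Nat.exists_eq_add_of_le hjj
    have e : μ ^ (i + l * (j' + q)) - μ ^ (i + l * j') =
        μ ^ (i + l * j') * ((μ ^ l) ^ q - 1) := by ring
    rw [e, norm_mul, norm_pow, hμ, one_pow, one_mul, norm_pow_sub_one_eq hp hcast q hl, hk]
    simp
  have hsep : ∀ i ∈ Finset.range l, (p : ℝ) ^ (-(k : ℤ)) < ‖c + μ ^ i‖ := fun i _ =>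
    lt_of_not_ge fun h => hclos (hpow i) h
  have hconst : ∀ i ∈ Finset.range l, ∀ j, ‖c + μ ^ (i + l * j)‖ = (p : ℝ) ^ (-(w i)) := by
    intro i hi j
    rw [← hw i hi]
    apply norm_eq_of_norm_sub_lt
    refine lt_of_le_of_lt ?_ (hsep i hi)
    rw [add_sub_add_left_eq_sub]
    have h := hpow i j 0
    simp only [mul_zero, add_zero, Nat.cast_zero, sub_zero] at h
    rw [h]
    exact mul_le_of_le_one_right (by positivity) (IsUltrametricDist.norm_natCast_le_one ℚ_[p] j)
  have hne0 : ∀ i ∈ Finset.range l, ∀ j, c + μ ^ (i + l * j) ≠ 0 := fun i hi j =>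
    norm_ne_zero_iff.1 (by rw [hconst i hi]; positivity)
  have hsim : ∀ i ∈ Finset.range l, ∀ j j',
      ‖a (i + l * j + 1) / a (i + l * j) - a (i + l * j' + 1) / a (i + l * j')‖ =
        (p : ℝ) ^ (-(vc + vΔ - 2 * w i + (k : ℤ))) * ‖(j : ℚ_[p]) - j'‖ := by
    intro i hi j j'
    rw [← hiso, hratio (hne0 i hi j) (hne0 i hi j')]
    rw [norm_div, norm_mul, norm_mul, norm_mul, hconst i hi, hconst i hi, hvΔ, hpow, hvc, ← mul_assoc, mul_div_right_comm,
      ← zpow_add₀ hp0.ne', ← zpow_add₀ hp0.ne', ← zpow_add₀ hp0.ne', ← zpow_sub₀ hp0.ne']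
    congr 2
    ring
  have ha0 : ∀ i ∈ Finset.range l, ∀ j, a (i + l * j) ≠ 0 := fun i hi j h => by
    have e := algebraMap_eq_mul_add_pow hc₂ hlam₁ ha (i + l * j)
    rw [h, map_zero] at e
    exact mul_ne_zero (mul_ne_zero hc₂ (pow_ne_zero _ hlam₁)) (hne0 i hi j) e.symm
  refine ⟨Set.Subset.antisymm ?_ ?_, ?_⟩
  · refine closure_minimal ?_ (isClosed_biUnion_finset fun i _ =>
      isClosed_le (by fun_prop) continuous_const)
    rintro _ ⟨n, -, rfl⟩
    have hi : n % l ∈ Finset.range l := Finset.mem_range.2 (Nat.mod_lt _ hl0)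
    refine Set.mem_biUnion hi ?_
    have h := hsim _ hi (n / l) 0
    rw [Nat.mod_add_div] at h
    simp only [mul_zero, add_zero, Nat.cast_zero, sub_zero] at h
    rw [Set.mem_ofPred_eq, h]
    exact mul_le_of_le_one_right (by positivity) (IsUltrametricDist.norm_natCast_le_one ℚ_[p] _)
  · intro x hx
    simp only [Set.mem_iUnion, Set.mem_ofPred_eq] at hx
    obtain ⟨i, hi, hx⟩ := hx
    refine Metric.mem_closure_iff.2 fun ε hε => ?_
    obtain ⟨j, hj⟩ := exists_norm_sub_lt_of_similarity
      (fun j => a (i + l * j + 1) / a (i + l * j)) _ (hsim i hi) (by simpa using hx) hε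
    exact ⟨_, ⟨i + l * j, ha0 i hi j, rfl⟩, by rwa [dist_eq_norm]⟩
  · intro i hi i' hi' hii
    rw [Finset.mem_coe] at hi hi'
    have hμμ : ‖μ ^ i - μ ^ i'‖ = 1 := by
      wlog hlt : i' < i generalizing i i'
      · rw [norm_sub_rev, this hi' hi hii.symm (by omega)]
      obtain ⟨q, rfl⟩ := Nat.exists_eq_add_of_le hlt.le
      have hq : (p : ℝ)⁻¹ < ‖μ ^ q - 1‖ := by
        by_contra! h
        have := hlmin q (by omega) h
        rw [Finset.mem_range] at hi
        omega
      obtain ⟨m, hm⟩ := hval (μ ^ q - 1) (sub_ne_zero.2 (hru q (by omega)))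
      have hle : ‖μ ^ q - 1‖ ≤ 1 := by
        refine (norm_sub_le_max_norm _ _).trans ?_
        simp [hμ]
      rw [hm] at hq hle
      rw [← zpow_neg_one, zpow_lt_zpow_iff_right₀ hp1] at hq
      rw [← zpow_zero (p : ℝ), zpow_le_zpow_iff_right₀ hp1] at hle
      have e : μ ^ (i' + q) - μ ^ i' = μ ^ i' * (μ ^ q - 1) := by ring
      rw [e, norm_mul, norm_pow, hμ, one_pow, one_mul, hm, show m = 0 by omega]
      simp
    have hwk : ∀ i ∈ Finset.range l, w i < k := fun i hi => by
      have h := hsep i hi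
      rw [hw i hi, zpow_lt_zpow_iff_right₀ hp1] at h
      omega
    have hww : w i = w i' ∨ min (w i) (w i') = 0 := by
      by_contra! hcon
      have hnn : ‖c + μ ^ i‖ ≠ ‖-(c + μ ^ i')‖ := by
        rw [norm_neg, hw i hi, hw i' hi', Ne, zpow_right_inj₀ hp0 hp1.ne']
        omega
      have h := IsUltrametricDist.norm_add_eq_max_of_norm_ne_norm hnn
      rw [← sub_eq_add_neg, add_sub_add_left_eq_sub, hμμ, norm_neg, hw i hi, hw i' hi'] at h
      rcases max_choice ((p : ℝ) ^ (-w i)) ((p : ℝ) ^ (-w i')) with h' | h'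
      · have h1 : (p : ℝ) ^ (-w i') ≤ (p : ℝ) ^ (-w i) := max_eq_left_iff.1 h'
        rw [h', ← zpow_zero (p : ℝ), zpow_right_inj₀ hp0 hp1.ne'] at h
        rw [zpow_le_zpow_iff_right₀ hp1] at h1
        omega
      · have h1 : (p : ℝ) ^ (-w i) ≤ (p : ℝ) ^ (-w i') := max_eq_right_iff.1 h'
        rw [h', ← zpow_zero (p : ℝ), zpow_right_inj₀ hp0 hp1.ne'] at h
        rw [zpow_le_zpow_iff_right₀ hp1] at h1
        omega
    have hrr : ‖a (i + 1) / a i - a (i' + 1) / a i'‖ =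
        (p : ℝ) ^ (-(vc + vΔ - w i - w i')) := by
      have h1 := hne0 i hi 0
      have h2 := hne0 i' hi' 0
      rw [mul_zero, add_zero] at h1 h2
      rw [← hiso, hratio h1 h2, norm_div, norm_mul, norm_mul, norm_mul, hw i hi, hw i' hi', hvΔ,
        hvc, hμμ, mul_one, ← zpow_add₀ hp0.ne', ← zpow_add₀ hp0.ne', ← zpow_sub₀ hp0.ne']
      congr 1
      ring
    refine Set.disjoint_left.2 fun x hx hx' => ?_
    rw [Set.mem_ofPred_eq] at hx hx'
    have hle := norm_sub_le_max_norm (x - a (i' + 1) / a i') (x - a (i + 1) / a i)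
    rw [sub_sub_sub_cancel_left, hrr] at hle
    have := hwk i hi
    have := hwk i' hi'
    rcases le_max_iff.1 hle with h | h
    · have h := h.trans hx'
      rw [zpow_le_zpow_iff_right₀ hp1] at h
      omega
    · have h := h.trans hx
      rw [zpow_le_zpow_iff_right₀ hp1] at h
      omega
end

section
/- Let L(a,1) be a Lucas sequence of the first kind (b = 1), let p ≥ 3 be a prime with rank of appearance α_L(p) > 2, and let λ_1, λ_2 be the characteristic roots. Let l be the order of λ_2/λ_1 modulo π, where π = p if λ_1, λ_2 ∈ ℚ_p or ℚ_p(√D) is an unramified extension of ℚ_p, and π is a uniformizer with ν_p(π) = 1/2 if ℚ_p(√D) is ramified. If p² ∣ D, or if (λ_2/λ_1)^l − 1 is not divisible by π², then the union of the closure in ℚ_p of {L_{n+α_L(p)}/L_n : n ≥ 1} and the closure in ℚ_p of {L_{n+α_L(p)−2}/L_n : n ≥ 1} equals all of ℚ_p. -/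
/-- The Lucas sequence of the first kind `L(a,b)`:
`L 0 = 0`, `L 1 = 1`, `L n = a L (n-1) + b L (n-2)`. -/
def lucasSeq (a b : ℤ) : ℕ → ℤ
  | 0 => 0
  | 1 => 1
  | n + 2 => a * lucasSeq a b (n + 1) + b * lucasSeq a b n

section Lucas

theorem lucasSeq_zero (a b : ℤ) : lucasSeq a b 0 = 0 := by rw [lucasSeq]

theorem lucasSeq_one (a b : ℤ) : lucasSeq a b 1 = 1 := by rw [lucasSeq]

theorem lucasSeq_add_two (a b : ℤ) (n : ℕ) :
    lucasSeq a b (n + 2) = a * lucasSeq a b (n + 1) + b * lucasSeq a b n := by rw [lucasSeq]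

theorem lucasSeq_add_add_one (a : ℤ) (m n : ℕ) :
    lucasSeq a 1 (m + n + 1) =
      lucasSeq a 1 (m + 1) * lucasSeq a 1 (n + 1) + lucasSeq a 1 m * lucasSeq a 1 n := by
  induction n using Nat.twoStepInduction with
  | zero => simp [lucasSeq_zero, lucasSeq_one]
  | one =>
    rw [lucasSeq_add_two a 1 m, lucasSeq_add_two a 1 0, lucasSeq_zero, lucasSeq_one]
    ring
  | more n ih₁ ih₂ =>
    rw [show m + (n + 2) + 1 = (m + n + 1) + 2 by ring, lucasSeq_add_two,
      show m + n + 1 + 1 = m + (n + 1) + 1 by ring, ih₁, ih₂, lucasSeq_add_two a 1 (n + 1),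
      lucasSeq_add_two a 1 n]
    ring

/-- The generalized Cassini identity. -/
theorem lucasSeq_docagne (a : ℤ) (i d : ℕ) :
    lucasSeq a 1 (i + d) * lucasSeq a 1 (i + 1) - lucasSeq a 1 i * lucasSeq a 1 (i + d + 1) =
      (-1) ^ i * lucasSeq a 1 d := by
  induction i with
  | zero => simp [lucasSeq_zero, lucasSeq_one]
  | succ i ih =>
    rw [show i + 1 + d = i + d + 1 by ring, lucasSeq_add_two a 1 (i + d), lucasSeq_add_two a 1 i,
      pow_succ]
    linear_combination -ih

theorem isCoprime_lucasSeq_succ (a : ℤ) (n : ℕ) :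
    IsCoprime (lucasSeq a 1 n) (lucasSeq a 1 (n + 1)) := by
  have h := lucasSeq_docagne a n 1
  rw [lucasSeq_one, mul_one] at h
  have hs : ((-1 : ℤ) ^ n) * (-1) ^ n = 1 := by rw [← mul_pow]; simp
  exact ⟨-(-1) ^ n * lucasSeq a 1 (n + 1 + 1), (-1) ^ n * lucasSeq a 1 (n + 1), by
    linear_combination (-1) ^ n * h + hs⟩

/-- Expansion of `L_{k(r+1)}` in powers of `L_{r+1}`, up to third order. -/
theorem lucasSeq_mul_expansion (a : ℤ) (r k : ℕ) : ∃ c d : ℤ,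
    2 * lucasSeq a 1 r ^ 2 * lucasSeq a 1 (k * (r + 1)) =
      2 * k * lucasSeq a 1 (r + 1) * lucasSeq a 1 r ^ (k + 1) +
      k * (k - 1) * a * lucasSeq a 1 (r + 1) ^ 2 * lucasSeq a 1 r ^ k +
      lucasSeq a 1 (r + 1) ^ 3 * c ∧
    2 * lucasSeq a 1 r ^ 2 * lucasSeq a 1 (k * (r + 1) + 1) =
      2 * lucasSeq a 1 r ^ (k + 2) +
      2 * k * a * lucasSeq a 1 (r + 1) * lucasSeq a 1 r ^ (k + 1) +
      k * (k - 1) * (a ^ 2 + 1) * lucasSeq a 1 (r + 1) ^ 2 * lucasSeq a 1 r ^ k +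
      lucasSeq a 1 (r + 1) ^ 3 * d := by
  induction k with
  | zero => exact ⟨0, 0, by simp [lucasSeq_zero], by simp [lucasSeq_one]⟩
  | succ k ih =>
    obtain ⟨c, d, hc, hd⟩ := ih
    have h₁ := lucasSeq_add_add_one a (k * (r + 1)) r
    have h₂ := lucasSeq_add_add_one a (k * (r + 1)) (r + 1)
    rw [lucasSeq_add_two a 1 r] at h₂
    rw [show (k + 1) * (r + 1) = k * (r + 1) + r + 1 by ring,
      show k * (r + 1) + r + 1 + 1 = k * (r + 1) + (r + 1) + 1 by ring, h₁, h₂]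
    generalize lucasSeq a 1 r = B at *
    generalize lucasSeq a 1 (r + 1) = A at *
    generalize lucasSeq a 1 (k * (r + 1)) = P at *
    generalize lucasSeq a 1 (k * (r + 1) + 1) = W at *
    refine ⟨k * (k - 1) * (a ^ 2 + 1) * B ^ k + A * d + B * c,
      a * (k * (k - 1) * (a ^ 2 + 1) * B ^ k) + (a * A + B) * d + k * (k - 1) * a * B ^ k + A * c,
      ?_, ?_⟩
    · push_cast
      linear_combination A * hd + B * hc
    · push_cast
      linear_combination (a * A + B) * hd + A * hc

/-- `2 ^ n * L_n` modulo the square of the discriminant. -/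
theorem lucasSeq_discr_expansion (a : ℤ) (n : ℕ) : ∃ c : ℤ,
    3 * a ^ 3 * 2 ^ n * lucasSeq a 1 n =
      6 * n * a ^ (n + 2) + n * (n - 1) * (n - 2) * a ^ n * (a ^ 2 + 4) + (a ^ 2 + 4) ^ 2 * c := by
  induction n using Nat.twoStepInduction with
  | zero => exact ⟨0, by simp [lucasSeq_zero]⟩
  | one => exact ⟨0, by simp [lucasSeq_one]; ring⟩
  | more n ih₁ ih₂ =>
    obtain ⟨c, hc⟩ := ih₁
    obtain ⟨d, hd⟩ := ih₂
    refine ⟨2 * a * d + 4 * c + n * (n - 1) * (n - 2) * a ^ n, ?_⟩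
    rw [lucasSeq_add_two]
    push_cast at hd ⊢
    linear_combination 2 * a * hd + 4 * hc

end Lucas

section Valuation

variable {p : ℕ} {a : ℤ}

theorem Prime.not_dvd_lucasSeq_succ {q : ℤ} (hq : Prime q) {n : ℕ} (h : q ∣ lucasSeq a 1 n) :
    ¬ q ∣ lucasSeq a 1 (n + 1) := fun h' =>
  hq.not_isUnit ((isCoprime_lucasSeq_succ a n).isUnit_of_dvd' h h')

theorem Prime.not_dvd_lucasSeq_pred {q : ℤ} (hq : Prime q) {n : ℕ}
    (h : q ∣ lucasSeq a 1 (n + 1)) : ¬ q ∣ lucasSeq a 1 n := fun h' =>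
  hq.not_isUnit ((isCoprime_lucasSeq_succ a n).isUnit_of_dvd' h' h)

/-- `L_{km}` and `L_m` have the same `q`-adic valuation if `q ∤ k`. -/
theorem lucasSeq_mul_eq_pow_mul {q : ℤ} (hq : Prime q) (hq2 : ¬ q ∣ 2) {s r k : ℕ} {u : ℤ}
    (hu : ¬ q ∣ u) (h : lucasSeq a 1 (r + 1) = q ^ (s + 1) * u) (hk : ¬ q ∣ k) :
    ∃ v : ℤ, ¬ q ∣ v ∧ lucasSeq a 1 (k * (r + 1)) = q ^ (s + 1) * v := by
  have hB : ¬ q ∣ lucasSeq a 1 r :=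
    hq.not_dvd_lucasSeq_pred (h ▸ (dvd_pow_self q s.succ_ne_zero).mul_right u)
  obtain ⟨c, -, hc, -⟩ := lucasSeq_mul_expansion a r k
  rw [h] at hc
  generalize lucasSeq a 1 r = B at *
  generalize lucasSeq a 1 (k * (r + 1)) = P at *
  have hmain : 2 * B ^ 2 * P = q ^ (s + 1) * (2 * k * u * B ^ (k + 1) +
      q * (q ^ s * (k * (k - 1) * a * u ^ 2 * B ^ k + q ^ (s + 1) * u ^ 3 * c))) := by
    rw [hc]; ring
  have hndvd : ¬ q ∣ 2 * B ^ 2 := fun h => (hq.dvd_or_dvd h).elim hq2 (hB ∘ hq.dvd_of_dvd_pow)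
  obtain ⟨v, rfl⟩ : q ^ (s + 1) ∣ P :=
    hq.pow_dvd_of_dvd_mul_left (s + 1) hndvd ⟨_, hmain⟩
  refine ⟨v, fun hv => ?_, rfl⟩
  have hcancel := mul_left_cancel₀ (pow_ne_zero (s + 1) hq.ne_zero)
    ((by ring : q ^ (s + 1) * (2 * B ^ 2 * v) = 2 * B ^ 2 * (q ^ (s + 1) * v)).trans hmain)
  have h₁ : q ∣ 2 * k * u * B ^ (k + 1) :=
    (dvd_add_left (dvd_mul_right q _)).1 (hcancel ▸ hv.mul_left _)
  rcases hq.dvd_or_dvd h₁ with h₂ | h₂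
  · rcases hq.dvd_or_dvd h₂ with h₃ | h₃
    · exact (hq.dvd_or_dvd h₃).elim hq2 hk
    · exact hu h₃
  · exact hB (hq.dvd_of_dvd_pow h₂)

/-- The `p`-adic valuation of `L_{pm}` exceeds that of `L_m` by one if `p ∣ L_m`. -/
theorem lucasSeq_prime_mul_eq_pow_mul (hq : Prime (p : ℤ)) (hq2 : ¬ (p : ℤ) ∣ 2) {s r : ℕ} {u : ℤ}
    (hu : ¬ (p : ℤ) ∣ u) (h : lucasSeq a 1 (r + 1) = (p : ℤ) ^ (s + 1) * u) :
    ∃ v : ℤ, ¬ (p : ℤ) ∣ v ∧ lucasSeq a 1 (p * (r + 1)) = (p : ℤ) ^ (s + 2) * v := by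
  have hB : ¬ (p : ℤ) ∣ lucasSeq a 1 r :=
    hq.not_dvd_lucasSeq_pred (h ▸ (dvd_pow_self _ s.succ_ne_zero).mul_right u)
  obtain ⟨c, -, hc, -⟩ := lucasSeq_mul_expansion a r p
  rw [h] at hc
  generalize lucasSeq a 1 r = B at *
  generalize lucasSeq a 1 (p * (r + 1)) = P at *
  have hmain : 2 * B ^ 2 * P = (p : ℤ) ^ (s + 2) * (2 * u * B ^ (p + 1) +
      p * (p ^ s * ((p - 1) * a * u ^ 2 * B ^ p + p ^ s * u ^ 3 * c))) := by
    rw [hc]; ring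
  have hndvd : ¬ (p : ℤ) ∣ 2 * B ^ 2 :=
    fun h => (hq.dvd_or_dvd h).elim hq2 (hB ∘ hq.dvd_of_dvd_pow)
  obtain ⟨v, rfl⟩ : (p : ℤ) ^ (s + 2) ∣ P :=
    hq.pow_dvd_of_dvd_mul_left (s + 2) hndvd ⟨_, hmain⟩
  refine ⟨v, fun hv => ?_, rfl⟩
  have hcancel := mul_left_cancel₀ (pow_ne_zero (s + 2) hq.ne_zero)
    ((by ring : (p : ℤ) ^ (s + 2) * (2 * B ^ 2 * v) = 2 * B ^ 2 * (p ^ (s + 2) * v)).trans hmain)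
  have h₁ : (p : ℤ) ∣ 2 * u * B ^ (p + 1) :=
    (dvd_add_left (dvd_mul_right _ _)).1 (hcancel ▸ hv.mul_left _)
  rcases hq.dvd_or_dvd h₁ with h₂ | h₂
  · exact (hq.dvd_or_dvd h₂).elim hq2 hu
  · exact hB (hq.dvd_of_dvd_pow h₂)

theorem lucasSeq_prime_pow_mul_eq_pow_mul (hq : Prime (p : ℤ)) (hq2 : ¬ (p : ℤ) ∣ 2) {m : ℕ}
    (hm : 0 < m) (hdvd : (p : ℤ) ∣ lucasSeq a 1 m) (hndvd : ¬ (p : ℤ) ^ 2 ∣ lucasSeq a 1 m)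
    (e : ℕ) : ∃ u : ℤ, ¬ (p : ℤ) ∣ u ∧ lucasSeq a 1 (p ^ e * m) = (p : ℤ) ^ (e + 1) * u := by
  induction e with
  | zero =>
    obtain ⟨u, hu⟩ := hdvd
    refine ⟨u, fun h => hndvd ?_, by simpa using hu⟩
    rw [hu, pow_two]
    exact mul_dvd_mul_left _ h
  | succ e ih =>
    obtain ⟨u, hu, h⟩ := ih
    have hp0 : 0 < p := Nat.pos_of_ne_zero fun h0 => hq.ne_zero (by simp [h0])
    obtain ⟨r, hr⟩ := Nat.exists_eq_succ_of_ne_zero (Nat.mul_pos (pow_pos hp0 e) hm).ne'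
    rw [hr] at h
    rw [pow_succ', mul_assoc, hr]
    exact lucasSeq_prime_mul_eq_pow_mul hq hq2 hu h

theorem not_pow_dvd_lucasSeq_mul (hq : Prime (p : ℤ)) (hq2 : ¬ (p : ℤ) ∣ 2) {m : ℕ}
    (hm : 0 < m) (hdvd : (p : ℤ) ∣ lucasSeq a 1 m) (hndvd : ¬ (p : ℤ) ^ 2 ∣ lucasSeq a 1 m)
    {k N : ℕ} (hk : 0 < k) (hkN : k < p ^ N) :
    ¬ (p : ℤ) ^ (N + 1) ∣ lucasSeq a 1 (k * m) := by
  have hp : p.Prime := Nat.prime_iff_prime_int.2 hq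
  obtain ⟨e, j, hj, rfl⟩ := Nat.exists_eq_pow_mul_and_not_dvd hk.ne' p hp.ne_one
  obtain ⟨u, hu, h⟩ := lucasSeq_prime_pow_mul_eq_pow_mul hq hq2 hm hdvd hndvd e
  obtain ⟨r, hr⟩ := Nat.exists_eq_succ_of_ne_zero (Nat.mul_pos (pow_pos hp.pos e) hm).ne'
  rw [hr] at h
  obtain ⟨v, hv, h'⟩ := lucasSeq_mul_eq_pow_mul hq hq2 hu h
    (fun hd => hj (Int.natCast_dvd_natCast.1 hd))
  rw [mul_comm (p ^ e) j, mul_assoc, hr, Nat.succ_eq_add_one, h']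
  have heN : e < N := (Nat.pow_lt_pow_iff_right hp.one_lt).1
    ((Nat.le_mul_of_pos_right _ (Nat.pos_of_mul_pos_left hk)).trans_lt hkN)
  intro hd
  have h₂ : (p : ℤ) ^ (e + 1) * p ∣ p ^ (e + 1) * v := by
    rw [← pow_succ]
    exact (pow_dvd_pow _ (by omega)).trans hd
  exact hv ((mul_dvd_mul_iff_left (pow_ne_zero _ hq.ne_zero)).1 h₂)

/-- If `p` divides the discriminant, then the rank of appearance of `p` is `p` and `p` exactly
divides `L_p`. -/
theorem not_sq_dvd_lucasSeq_of_dvd_discr (hq : Prime (p : ℤ)) (hp : 3 ≤ p)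
    (hD : (p : ℤ) ∣ a ^ 2 + 4) {m : ℕ} (hm : 0 < m) (hdvd : (p : ℤ) ∣ lucasSeq a 1 m)
    (hmin : ∀ n : ℕ, 0 < n → (p : ℤ) ∣ lucasSeq a 1 n → m ≤ n) :
    ¬ (p : ℤ) ^ 2 ∣ lucasSeq a 1 m := by
  have hpn : p.Prime := Nat.prime_iff_prime_int.2 hq
  have h2 : ¬ (p : ℤ) ∣ 2 := fun h => by
    have := Int.le_of_dvd (by norm_num) h
    omega
  have h3 : ¬ (p : ℤ) ∣ 3 := fun h => by
    have h₁ := Int.le_of_dvd (by norm_num) h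
    obtain rfl : p = 3 := by omega
    have : a % 3 = 0 ∨ a % 3 = 1 ∨ a % 3 = 2 := by omega
    rcases this with h | h | h <;>
      simp [pow_two, Int.add_emod, Int.mul_emod, h, Int.dvd_iff_emod_eq_zero] at hD
  have ha : ¬ (p : ℤ) ∣ a := fun h => by
    have h4 : (p : ℤ) ∣ 2 ^ 2 := by
      simpa using (dvd_add_right (dvd_pow h two_ne_zero)).1 hD
    exact h2 (hq.dvd_of_dvd_pow h4)
  have h6 : ¬ (p : ℤ) ∣ 6 := fun h =>
    (hq.dvd_or_dvd (show (p : ℤ) ∣ 2 * 3 from h)).elim h2 h3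
  have hunit : ∀ n : ℕ, ¬ (p : ℤ) ∣ 3 * a ^ 3 * 2 ^ n := fun n h => by
    rcases hq.dvd_or_dvd h with h | h
    · exact (hq.dvd_or_dvd h).elim h3 (ha ∘ hq.dvd_of_dvd_pow)
    · exact h2 (hq.dvd_of_dvd_pow h)
  obtain ⟨d, hd⟩ := hD
  have hpm : p ∣ m := by
    obtain ⟨c, hc⟩ := lucasSeq_discr_expansion a m
    rw [hd] at hc
    have h₁ : (p : ℤ) ∣ 6 * m * a ^ (m + 2) := by
      have h₂ : 6 * m * a ^ (m + 2) = 3 * a ^ 3 * 2 ^ m * lucasSeq a 1 m -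
          p * (m * (m - 1) * (m - 2) * a ^ m * d + p * d ^ 2 * c) := by
        linear_combination -hc
      rw [h₂]
      exact dvd_sub (hdvd.mul_left _) (dvd_mul_right _ _)
    rcases hq.dvd_or_dvd h₁ with h₁ | h₁
    · exact Int.natCast_dvd_natCast.1 ((hq.dvd_or_dvd h₁).resolve_left h6)
    · exact absurd (hq.dvd_of_dvd_pow h₁) ha
  obtain ⟨c, hc⟩ := lucasSeq_discr_expansion a p
  rw [hd] at hc
  have hmain : 3 * a ^ 3 * 2 ^ p * lucasSeq a 1 p =
      p * (6 * a ^ (p + 2) + p * ((p - 1) * (p - 2) * a ^ p * d + d ^ 2 * c)) := by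
    linear_combination hc
  have hpL : (p : ℤ) ∣ lucasSeq a 1 p :=
    (hq.dvd_or_dvd ⟨_, hmain⟩).resolve_left (hunit p)
  obtain rfl : m = p := le_antisymm (hmin p hpn.pos hpL) (Nat.le_of_dvd hm hpm)
  rintro ⟨t, ht⟩
  rw [ht] at hmain
  have hcancel := mul_left_cancel₀ hq.ne_zero
    ((by ring : (m : ℤ) * (m * (3 * a ^ 3 * 2 ^ m * t)) = 3 * a ^ 3 * 2 ^ m * (m ^ 2 * t)).trans
      hmain)
  have h₁ : (m : ℤ) ∣ 6 * a ^ (m + 2) :=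
    (dvd_add_left (dvd_mul_right _ _)).1 (hcancel ▸ dvd_mul_right _ _)
  exact (hq.dvd_or_dvd h₁).elim h6 (ha ∘ hq.dvd_of_dvd_pow)

end Valuation

section Density

variable {p : ℕ} [Fact p.Prime] {a : ℤ} {m : ℕ}

/-- If `p` exactly divides `L_m`, then the quotients `L_{km} / L_{km+1}` with `1 ≤ k ≤ p ^ N` run
through all classes of `p ℤ` modulo `p ^ (N + 1)`. -/
theorem exists_pow_dvd_lucasSeq_sub (hp : 3 ≤ p) (hm : 0 < m) (hdvd : (p : ℤ) ∣ lucasSeq a 1 m)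
    (hndvd : ¬ (p : ℤ) ^ 2 ∣ lucasSeq a 1 m) (N : ℕ) (t : ℤ) :
    ∃ k : ℕ, 0 < k ∧
      (p : ℤ) ^ (N + 1) ∣ lucasSeq a 1 (k * m) - p * t * lucasSeq a 1 (k * m + 1) := by
  have hq : Prime (p : ℤ) := Nat.prime_iff_prime_int.1 Fact.out
  have hq2 : ¬ (p : ℤ) ∣ 2 := fun h => by
    have := Int.le_of_dvd (by norm_num) h
    omega
  have hmul : ∀ k : ℕ, (p : ℤ) ∣ lucasSeq a 1 (k * m) := fun k => by
    induction k with
    | zero => simp [lucasSeq_zero]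
    | succ k ih =>
      obtain ⟨r, rfl⟩ := Nat.exists_eq_succ_of_ne_zero hm.ne'
      rw [show (k + 1) * r.succ = k * r.succ + r + 1 by rw [Nat.succ_eq_add_one]; ring,
        lucasSeq_add_add_one]
      exact dvd_add (hdvd.mul_left _) (ih.mul_right _)
  choose g hg using hmul
  have hw : ∀ k : ℕ, IsUnit ((lucasSeq a 1 (k * m + 1) : ℤ) : ZMod (p ^ N)) := fun k => by
    rw [ZMod.coe_int_isUnit_iff_isCoprime]
    push_cast
    exact ((Prime.coprime_iff_not_dvd hq).2
      (hq.not_dvd_lucasSeq_succ ⟨_, hg k⟩)).pow_left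
  let f : Fin (p ^ N) → ZMod (p ^ N) := fun k =>
    (g (k + 1) : ZMod (p ^ N)) * ((hw (k + 1)).unit⁻¹ : (ZMod (p ^ N))ˣ)
  have key : ∀ (i d : ℕ), 0 < d → d < p ^ N →
      ¬ (p : ℤ) ^ N ∣ g (i + d) * lucasSeq a 1 (i * m + 1) -
        g i * lucasSeq a 1 ((i + d) * m + 1) := by
    intro i d hd hdN h
    refine not_pow_dvd_lucasSeq_mul hq hq2 hm hdvd hndvd hd hdN ?_
    have h₁ := lucasSeq_docagne a (i * m) (d * m)
    rw [← add_mul, hg, hg i] at h₁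
    have h₂ : (p : ℤ) ^ (N + 1) ∣ (-1) ^ (i * m) * lucasSeq a 1 (d * m) := by
      rw [← h₁, pow_succ', mul_assoc, mul_assoc, ← mul_sub]
      exact mul_dvd_mul_left _ h
    exact ((isUnit_one.neg.pow _).dvd_mul_left).1 h₂
  have hcross : ∀ i j : Fin (p ^ N), f i = f j →
      (p : ℤ) ^ N ∣ g (i + 1) * lucasSeq a 1 ((j + 1) * m + 1) -
        g (j + 1) * lucasSeq a 1 ((i + 1) * m + 1) := by
    intro i j hij
    have h₁ := (Units.mul_inv_eq_iff_eq_mul _).1 hij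
    rw [mul_right_comm] at h₁
    have h₂ := (Units.eq_mul_inv_iff_mul_eq _).1 h₁
    simp only [IsUnit.unit_spec] at h₂
    have h₃ := (ZMod.intCast_zmod_eq_zero_iff_dvd (g (i + 1) * lucasSeq a 1 ((j + 1) * m + 1) -
        g (j + 1) * lucasSeq a 1 ((i + 1) * m + 1)) (p ^ N)).1 (by
          push_cast
          rw [sub_eq_zero]
          exact h₂)
    simpa using h₃
  have hlt : ∀ i j : Fin (p ^ N), f i = f j → ¬ i < j := by
    intro i j hij hlt
    have hlt' : (i : ℕ) < j := hlt
    have h := hcross j i hij.symm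
    obtain ⟨d, hd⟩ := Nat.exists_eq_add_of_lt hlt'
    have hjN := j.2
    refine key (i + 1) (d + 1) (by omega) (by omega) ?_
    rwa [show (i : ℕ) + 1 + (d + 1) = j + 1 by omega]
  have hinj : Function.Injective f := fun i j hij =>
    le_antisymm (not_lt.1 (hlt j i hij.symm)) (not_lt.1 (hlt i j hij))
  have : NeZero (p ^ N) := ⟨pow_ne_zero _ (by omega)⟩
  have hbij : Function.Bijective f :=
    (Fintype.bijective_iff_injective_and_card f).2 ⟨hinj, by simp [ZMod.card]⟩
  obtain ⟨k, hk⟩ := hbij.2 (t : ZMod (p ^ N))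
  refine ⟨k + 1, by omega, ?_⟩
  have h₁ := (Units.mul_inv_eq_iff_eq_mul _).1 hk
  rw [IsUnit.unit_spec] at h₁
  have h₂ := (ZMod.intCast_zmod_eq_zero_iff_dvd
    (g (k + 1) - t * lucasSeq a 1 ((k + 1) * m + 1)) (p ^ N)).1 (by
      push_cast
      rw [sub_eq_zero]
      exact h₁)
  rw [hg, mul_assoc, ← mul_sub, pow_succ']
  exact mul_dvd_mul_left _ (by simpa using h₂)

/-- If `p` exactly divides `L_m`, then the quotients `L_n / L_{n+1}` with `p ∣ L_n ≠ 0` are dense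
in `p ℤ_p`. -/
theorem exists_tendsto_lucasSeq_div (hp : 3 ≤ p) (hm : 0 < m) (hdvd : (p : ℤ) ∣ lucasSeq a 1 m)
    (hndvd : ¬ (p : ℤ) ^ 2 ∣ lucasSeq a 1 m) {z : ℚ_[p]} (hz : ‖z‖ < 1) :
    ∃ n : ℕ → ℕ, (∀ i, 0 < n i ∧ lucasSeq a 1 (n i) ≠ 0 ∧ lucasSeq a 1 (n i + 1) ≠ 0) ∧
      Filter.Tendsto
        (fun i => (lucasSeq a 1 (n i) : ℚ_[p]) / (lucasSeq a 1 (n i + 1) : ℚ_[p]))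
        Filter.atTop (nhds z) := by
  have hq : Prime (p : ℤ) := Nat.prime_iff_prime_int.1 Fact.out
  have hq2 : ¬ (p : ℤ) ∣ 2 := fun h => by
    have := Int.le_of_dvd (by norm_num) h
    omega
  obtain ⟨y, hy⟩ : ∃ y : ℤ_[p], z = p * y := by
    obtain ⟨y, hy⟩ := (PadicInt.norm_lt_one_iff_dvd (⟨z, hz.le⟩ : ℤ_[p])).1 hz
    exact ⟨y, by simpa using congrArg (Subtype.val) hy⟩
  choose k hk0 hk using fun N : ℕ =>
    exists_pow_dvd_lucasSeq_sub (a := a) hp hm hdvd hndvd N (y.appr N)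
  have hne : ∀ N, lucasSeq a 1 (k N * m) ≠ 0 := fun N h => by
    refine not_pow_dvd_lucasSeq_mul hq hq2 hm hdvd hndvd (N := k N) (hk0 N)
      (Nat.lt_pow_self (by omega)) ?_
    rw [h]
    exact dvd_zero _
  have hpdvd : ∀ N, (p : ℤ) ∣ lucasSeq a 1 (k N * m) := fun N => by
    have h₁ := (dvd_pow_self (p : ℤ) N.succ_ne_zero).trans (hk N)
    rw [mul_assoc] at h₁
    exact (dvd_sub_left (dvd_mul_right _ _)).1 h₁
  have hndvd' : ∀ N, ¬ (p : ℤ) ∣ lucasSeq a 1 (k N * m + 1) := fun N =>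
    hq.not_dvd_lucasSeq_succ (hpdvd N)
  have hne' : ∀ N, lucasSeq a 1 (k N * m + 1) ≠ 0 := fun N h =>
    hndvd' N (h ▸ dvd_zero _)
  refine ⟨fun N => k N * m, fun N => ⟨Nat.mul_pos (hk0 N) hm, hne N, hne' N⟩, ?_⟩
  rw [tendsto_iff_norm_sub_tendsto_zero]
  have hp1 : (1 : ℝ) < p := by exact_mod_cast (by omega : 1 < p)
  refine squeeze_zero (fun _ => norm_nonneg _) (g := fun N : ℕ => ((p : ℝ)⁻¹) ^ N) (fun N => ?_)
    (tendsto_pow_atTop_nhds_zero_of_lt_one (by positivity) (inv_lt_one_of_one_lt₀ hp1))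
  have hnorm : ‖(lucasSeq a 1 (k N * m + 1) : ℚ_[p])‖ = 1 :=
    le_antisymm (Padic.norm_int_le_one _)
      (not_lt.1 fun h => hndvd' N (Padic.norm_intCast_lt_one_iff.1 h))
  have hW : (lucasSeq a 1 (k N * m + 1) : ℚ_[p]) ≠ 0 := by exact_mod_cast hne' N
  have h₁ : ‖((lucasSeq a 1 (k N * m) - p * (y.appr N : ℕ) * lucasSeq a 1 (k N * m + 1) : ℤ) :
      ℚ_[p])‖ ≤ ((p : ℝ)⁻¹) ^ N := by
    refine ((Padic.norm_int_le_pow_iff_dvd _ N).2 ?_).trans (by simp)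
    exact (pow_dvd_pow _ N.le_succ).trans (hk N)
  have h₂ : ‖(y.appr N : ℚ_[p]) - y‖ ≤ ((p : ℝ)⁻¹) ^ N := by
    have := (PadicInt.norm_le_pow_iff_mem_span_pow _ N).2 (PadicInt.appr_spec N y)
    rw [norm_sub_rev]
    simpa [PadicInt.norm_def] using this
  have h₃ : (lucasSeq a 1 (k N * m) : ℚ_[p]) / (lucasSeq a 1 (k N * m + 1) : ℚ_[p]) - z =
      ((lucasSeq a 1 (k N * m) - p * (y.appr N : ℕ) * lucasSeq a 1 (k N * m + 1) : ℤ) : ℚ_[p]) /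
        (lucasSeq a 1 (k N * m + 1) : ℚ_[p]) + p * ((y.appr N : ℚ_[p]) - y) := by
    rw [hy]
    push_cast
    field_simp
    ring
  rw [h₃]
  refine (Padic.nonarchimedean _ _).trans (max_le ?_ ?_)
  · rwa [norm_div, hnorm, div_one]
  · rw [norm_mul]
    exact (mul_le_of_le_one_left (norm_nonneg _) Padic.norm_p_lt_one.le).trans h₂

end Density

section Closure

variable {p : ℕ} [Fact p.Prime] {a : ℤ} {α : ℕ}

/-- The quotient sets cover `ℚ_p` as soon as `p` exactly divides `L_α`, for `α` the rank of
appearance of `p`. -/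
theorem closure_union_closure_eq_univ (hp : 3 ≤ p) (hα2 : 2 < α)
    (hdvd : (p : ℤ) ∣ lucasSeq a 1 α) (hndvd : ¬ (p : ℤ) ^ 2 ∣ lucasSeq a 1 α)
    (hmin : ∀ m : ℕ, 0 < m → (p : ℤ) ∣ lucasSeq a 1 m → α ≤ m) :
    closure {x : ℚ_[p] | ∃ n : ℕ, 1 ≤ n ∧
        x = (lucasSeq a 1 (n + α) : ℚ_[p]) / (lucasSeq a 1 n : ℚ_[p])} ∪
      closure {x : ℚ_[p] | ∃ n : ℕ, 1 ≤ n ∧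
        x = (lucasSeq a 1 (n + α - 2) : ℚ_[p]) / (lucasSeq a 1 n : ℚ_[p])} = Set.univ := by
  obtain ⟨r, rfl⟩ : ∃ r, α = r + 2 := ⟨α - 2, by omega⟩
  refine Set.eq_univ_of_forall fun w => ?_
  rcases le_or_gt 1 ‖w - lucasSeq a 1 (r + 1)‖ with hw | hw
  · left
    have hnorm : ‖(lucasSeq a 1 (r + 2) : ℚ_[p])‖ < 1 :=
      Padic.norm_intCast_lt_one_iff.2 hdvd
    have hA : (lucasSeq a 1 (r + 2) : ℚ_[p]) ≠ 0 := by
      intro h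
      have h0 : lucasSeq a 1 (r + 2) = 0 := by exact_mod_cast h
      exact hndvd (h0 ▸ dvd_zero _)
    have hw0 : w - lucasSeq a 1 (r + 1) ≠ 0 := fun h => by
      rw [h, norm_zero] at hw
      linarith
    obtain ⟨n, hn, hlim⟩ := exists_tendsto_lucasSeq_div hp (by omega) hdvd hndvd
      (z := lucasSeq a 1 (r + 2) / (w - lucasSeq a 1 (r + 1))) (by
        rw [norm_div]
        exact (div_le_self (norm_nonneg _) hw).trans_lt hnorm)
    have hlim' := ((hlim.inv₀ (div_ne_zero hA hw0)).const_mul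
      (lucasSeq a 1 (r + 2) : ℚ_[p])).add_const (lucasSeq a 1 (r + 1) : ℚ_[p])
    have hval : (lucasSeq a 1 (r + 2) : ℚ_[p]) *
        (lucasSeq a 1 (r + 2) / (w - lucasSeq a 1 (r + 1)))⁻¹ + lucasSeq a 1 (r + 1) = w := by
      field_simp
      ring
    rw [hval] at hlim'
    refine mem_closure_of_tendsto hlim' (Filter.Eventually.of_forall fun i => ?_)
    obtain ⟨h0, hL, -⟩ := hn i
    have hL' : (lucasSeq a 1 (n i) : ℚ_[p]) ≠ 0 := by exact_mod_cast hL
    refine ⟨n i, h0, ?_⟩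
    rw [show n i + (r + 2) = n i + (r + 1) + 1 by ring,
      lucasSeq_add_add_one a (n i) (r + 1)]
    push_cast
    rw [inv_div]
    field_simp
  · right
    have hC : (lucasSeq a 1 r : ℚ_[p]) ≠ 0 := by
      intro h
      have h0 : lucasSeq a 1 r = 0 := by exact_mod_cast h
      have := hmin r (by omega) (h0 ▸ dvd_zero _)
      omega
    have hnorm : ‖(lucasSeq a 1 r : ℚ_[p])‖ = 1 := by
      refine le_antisymm (Padic.norm_int_le_one _) (not_lt.1 fun h => ?_)
      have := hmin r (by omega) (Padic.norm_intCast_lt_one_iff.1 h)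
      omega
    obtain ⟨n, hn, hlim⟩ := exists_tendsto_lucasSeq_div hp (by omega) hdvd hndvd
      (z := (w - lucasSeq a 1 (r + 1)) / lucasSeq a 1 r) (by
        rwa [norm_div, hnorm, div_one])
    have hlim' := (hlim.const_mul (lucasSeq a 1 r : ℚ_[p])).add_const
      (lucasSeq a 1 (r + 1) : ℚ_[p])
    rw [mul_div_cancel₀ _ hC, sub_add_cancel] at hlim'
    refine mem_closure_of_tendsto hlim' (Filter.Eventually.of_forall fun i => ?_)
    obtain ⟨-, -, hL⟩ := hn i
    have hL' : (lucasSeq a 1 (n i + 1) : ℚ_[p]) ≠ 0 := by exact_mod_cast hL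
    refine ⟨n i + 1, by omega, ?_⟩
    rw [show n i + 1 + (r + 2) - 2 = n i + r + 1 by omega, lucasSeq_add_add_one]
    push_cast
    field_simp
    ring

end Closure

/-- The Binet formula, with the denominator cleared. -/
theorem sub_mul_lucasSeq {K : Type*} [CommRing K] {a : ℤ} {x y : K} (hsum : x + y = a)
    (hprod : x * y = -1) (n : ℕ) : (x - y) * (lucasSeq a 1 n : K) = x ^ n - y ^ n := by
  induction n using Nat.twoStepInduction with
  | zero => simp [lucasSeq_zero]
  | one => simp [lucasSeq_one]
  | more n ih₁ ih₂ =>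
    rw [lucasSeq_add_two]
    push_cast
    rw [← hsum]
    linear_combination (x + y) * ih₂ + ih₁ + (x ^ n - y ^ n) * hprod

theorem norm_le_one_of_sq_eq {K : Type*} [NormedField K]
    (hna : ∀ x y : K, ‖x + y‖ ≤ max ‖x‖ ‖y‖) {c x : K} (hc : ‖c‖ ≤ 1)
    (hx : x ^ 2 = c * x + 1) : ‖x‖ ≤ 1 := by
  by_contra! h
  have h₁ : ‖x‖ ^ 2 ≤ max (‖c‖ * ‖x‖) 1 := by
    rw [← norm_pow, hx, ← norm_mul, ← norm_one (α := K)]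
    exact hna _ _
  have h₂ : max (‖c‖ * ‖x‖) 1 ≤ ‖x‖ :=
    max_le (mul_le_of_le_one_left (norm_nonneg _) hc) h.le
  nlinarith

theorem stmt_11 (p : ℕ) [Fact p.Prime] (hp : 3 ≤ p)
    (a : ℤ) (ha : a ≠ 0)
    -- `K = ℚ_p(√D)` where `D = a² + 4`: a nonarchimedean normed field extension
    -- of `ℚ_p` spanned by `1` and a square root `δ` of `D` (if `λ₁, λ₂ ∈ ℚ_p`
    -- then `K = ℚ_p`)
    (K : Type) [NormedField K] [Algebra ℚ_[p] K]
    (hiso : ∀ x : ℚ_[p], ‖algebraMap ℚ_[p] K x‖ = ‖x‖)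
    (hna : ∀ x y : K, ‖x + y‖ ≤ max ‖x‖ ‖y‖)
    (δ : K) (hδ : δ ^ 2 = algebraMap ℚ_[p] K ((a ^ 2 + 4 : ℤ) : ℚ_[p]))
    (hspan : ∀ x : K, ∃ u v : ℚ_[p], x = algebraMap ℚ_[p] K u + algebraMap ℚ_[p] K v * δ)
    -- `π = p` if `λ₁, λ₂ ∈ ℚ_p` or `ℚ_p(√D)` is unramified (norms are integer
    -- powers of `p`); `π` is a uniformizer, `‖π‖ = p^(-1/2)`, if `ℚ_p(√D)` is ramified
    (π : K)
    (hπ : (π = algebraMap ℚ_[p] K (p : ℚ_[p]) ∧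
            ∀ x : K, x ≠ 0 → ∃ m : ℤ, ‖x‖ = (p : ℝ) ^ (-m)) ∨
          ‖π‖ = (p : ℝ) ^ (-(1 / 2 : ℝ)))
    -- the characteristic roots `λ₁ = (a + √D)/2`, `λ₂ = (a - √D)/2`
    (lam₁ lam₂ : K)
    (hlam₁ : lam₁ = (algebraMap ℚ_[p] K (a : ℚ_[p]) + δ) / 2)
    (hlam₂ : lam₂ = (algebraMap ℚ_[p] K (a : ℚ_[p]) - δ) / 2)
    -- `α` is the rank of appearance of `p` in `L(a,1)`, and `α > 2`
    (α : ℕ) (hα0 : 0 < α) (hαdvd : (p : ℤ) ∣ lucasSeq a 1 α)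
    (hαmin : ∀ m : ℕ, 0 < m → (p : ℤ) ∣ lucasSeq a 1 m → α ≤ m)
    (hα2 : 2 < α)
    -- `l` is the order of `λ₂/λ₁` modulo `π`
    (l : ℕ) (hl0 : 0 < l) (hl : ‖(lam₂ / lam₁) ^ l - 1‖ ≤ ‖π‖)
    (hlmin : ∀ m : ℕ, 0 < m → ‖(lam₂ / lam₁) ^ m - 1‖ ≤ ‖π‖ → l ≤ m)
    -- `p² ∣ D`, or `(λ₂/λ₁) ^ l - 1` is not divisible by `π²`
    (hcase : (p : ℤ) ^ 2 ∣ (a ^ 2 + 4) ∨ ¬ ‖(lam₂ / lam₁) ^ l - 1‖ ≤ ‖π‖ ^ 2) :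
    closure {x : ℚ_[p] | ∃ n : ℕ, 1 ≤ n ∧
        x = (lucasSeq a 1 (n + α) : ℚ_[p]) / (lucasSeq a 1 n : ℚ_[p])} ∪
      closure {x : ℚ_[p] | ∃ n : ℕ, 1 ≤ n ∧
        x = (lucasSeq a 1 (n + α - 2) : ℚ_[p]) / (lucasSeq a 1 n : ℚ_[p])} = Set.univ := by
  have hq : Prime (p : ℤ) := Nat.prime_iff_prime_int.1 Fact.out
  refine closure_union_closure_eq_univ hp hα2 hαdvd ?_ hαmin
  by_cases hD : (p : ℤ) ∣ a ^ 2 + 4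
  · exact not_sq_dvd_lucasSeq_of_dvd_discr hq hp hD hα0 hαdvd hαmin
  have hcase' := hcase.resolve_left fun h => hD ((dvd_pow_self _ two_ne_zero).trans h)
  have hpr : (1 : ℝ) < p := by exact_mod_cast (by omega : 1 < p)
  have hπ1 : ‖π‖ < 1 ∧ (p : ℝ)⁻¹ ≤ ‖π‖ := by
    rcases hπ with ⟨rfl, -⟩ | h
    · rw [hiso, Padic.norm_p]
      exact ⟨inv_lt_one_of_one_lt₀ hpr, le_rfl⟩
    · rw [h, ← Real.rpow_neg_one]
      exact ⟨Real.rpow_lt_one_of_one_lt_of_neg hpr (by norm_num),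
        Real.rpow_le_rpow_of_exponent_le hpr.le (by norm_num)⟩
  have : CharZero K := charZero_of_injective_algebraMap (algebraMap ℚ_[p] K).injective
  have hnormZ : ∀ c : ℤ, ‖(c : K)‖ = ‖(c : ℚ_[p])‖ := fun c => by
    rw [← hiso, map_intCast]
  rw [map_intCast] at hδ hlam₁ hlam₂
  have hsum : lam₁ + lam₂ = a := by rw [hlam₁, hlam₂]; ring
  have hdiff : lam₁ - lam₂ = δ := by rw [hlam₁, hlam₂]; ring
  have hprod : lam₁ * lam₂ = -1 := by
    push_cast at hδ
    rw [hlam₁, hlam₂]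
    linear_combination -hδ / 4
  have ha1 : ‖(a : K)‖ ≤ 1 := by rw [hnormZ]; exact Padic.norm_int_le_one a
  have h₁ : ‖lam₁‖ ≤ 1 := norm_le_one_of_sq_eq hna ha1 (by linear_combination lam₁ * hsum - hprod)
  have h₂ : ‖lam₂‖ ≤ 1 := norm_le_one_of_sq_eq hna ha1 (by linear_combination lam₂ * hsum - hprod)
  have h₁₂ : ‖lam₁‖ * ‖lam₂‖ = 1 := by rw [← norm_mul, hprod, norm_neg, norm_one]
  have hlam : ‖lam₁‖ = 1 := by nlinarith [norm_nonneg lam₁, norm_nonneg lam₂]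
  have hδ1 : ‖δ‖ = 1 := by
    have hs : ‖δ‖ ^ 2 = 1 := by
      rw [← norm_pow, hδ, hnormZ]
      exact le_antisymm (Padic.norm_int_le_one _)
        (not_lt.1 fun h => hD (Padic.norm_intCast_lt_one_iff.1 h))
    exact (pow_eq_one_iff_of_nonneg (norm_nonneg _) two_ne_zero).1 hs
  have hne : lam₁ ≠ 0 := norm_ne_zero_iff.1 (by rw [hlam]; exact one_ne_zero)
  have hL : ∀ n : ℕ, ‖(lam₂ / lam₁) ^ n - 1‖ = ‖(lucasSeq a 1 n : ℚ_[p])‖ := fun n => by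
    have h := congrArg norm (sub_mul_lucasSeq hsum hprod n)
    rw [hdiff, norm_mul, hδ1, one_mul, hnormZ] at h
    rw [h, div_pow, div_sub_one (pow_ne_zero n hne), norm_div, norm_pow, hlam, one_pow, div_one,
      norm_sub_rev]
  intro hsq
  have hα : ‖(lucasSeq a 1 α : ℚ_[p])‖ ≤ ‖π‖ ^ 2 :=
    calc ‖(lucasSeq a 1 α : ℚ_[p])‖ ≤ (p : ℝ) ^ (-(2 : ℕ) : ℤ) :=
          (Padic.norm_int_le_pow_iff_dvd _ 2).2 (by exact_mod_cast hsq)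
      _ = (p : ℝ)⁻¹ ^ 2 := by rw [zpow_neg, zpow_natCast, inv_pow]
      _ ≤ ‖π‖ ^ 2 := pow_le_pow_left₀ (by positivity) hπ1.2 2
  have hlα : l = α := by
    refine le_antisymm (hlmin α hα0 ?_) (hαmin l hl0 ?_)
    · rw [hL]
      exact hα.trans (pow_le_of_le_one (norm_nonneg _) hπ1.1.le two_ne_zero)
    · rw [hL] at hl
      exact Padic.norm_intCast_lt_one_iff.1 (hl.trans_lt hπ1.1)
  rw [hL, hlα] at hcase'
  exact hcase' hα
end
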